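/- arXiv:1208.2232 — 2 statements merged into one kernel-verified Lean document; each statement's English description precedes it below -/
import Mathlib

section
/- There is a short exact sequence of graded left A(1)-modules 0 → Σ³ A(1)/(Sq¹,Sq³) → A(1)/(Sq¹) → A(1)/(Sq¹,Sq³) → 0, where the first map sends the generator to the class of Sq³ = Sq¹Sq² (equivalently Sq²Sq¹ in the quotient) and the second is the canonical projection. -/
noncomputable section

/-- Relations defining A(1): (Sq¹)² = 0, Sq²Sq² = Sq¹Sq²Sq¹, Sq²Sq¹Sq²Sq¹ = Sq¹Sq²Sq¹Sq². -/
inductive A1Rel : FreeAlgebra (ZMod 2) (Fin 2) → FreeAlgebra (ZMod 2) (Fin 2) → Prop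
  | sq1_sq1 : A1Rel (FreeAlgebra.ι (ZMod 2) (0 : Fin 2) * FreeAlgebra.ι (ZMod 2) 0) 0
  | adem : A1Rel (FreeAlgebra.ι (ZMod 2) (1 : Fin 2) * FreeAlgebra.ι (ZMod 2) 1)
      (FreeAlgebra.ι (ZMod 2) (0 : Fin 2) * FreeAlgebra.ι (ZMod 2) 1 * FreeAlgebra.ι (ZMod 2) 0)
  | top : A1Rel
      (FreeAlgebra.ι (ZMod 2) (1 : Fin 2) * FreeAlgebra.ι (ZMod 2) 0 *
        FreeAlgebra.ι (ZMod 2) 1 * FreeAlgebra.ι (ZMod 2) 0)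
      (FreeAlgebra.ι (ZMod 2) (0 : Fin 2) * FreeAlgebra.ι (ZMod 2) 1 *
        FreeAlgebra.ι (ZMod 2) 0 * FreeAlgebra.ι (ZMod 2) 1)

/-- The algebra A(1), subalgebra of the mod-2 Steenrod algebra generated by Sq¹, Sq². -/
abbrev A1 := RingQuot A1Rel

def Sq1 : A1 := RingQuot.mkAlgHom (ZMod 2) A1Rel (FreeAlgebra.ι (ZMod 2) 0)
def Sq2 : A1 := RingQuot.mkAlgHom (ZMod 2) A1Rel (FreeAlgebra.ι (ZMod 2) 1)
def Sq3 : A1 := Sq1 * Sq2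

/-- Generators, for building monomial words. -/
def A1gen : Fin 2 → A1
  | 0 => Sq1
  | 1 => Sq2

/-- Weight of a word: Sq¹ has degree 1, Sq² has degree 2. -/
def A1wt (l : List (Fin 2)) : ℕ := (l.map fun i => (i : ℕ) + 1).sum

/-- The product of a word of generators. -/
def A1word (l : List (Fin 2)) : A1 := (l.map A1gen).prod

/-- The degree-`n` graded component of A(1): the F₂-span of monomials of weight `n`. -/
def A1deg (n : ℕ) : Submodule (ZMod 2) A1 :=
  Submodule.span (ZMod 2) {x | ∃ l, A1wt l = n ∧ x = A1word l}

/-- The degree-`n` component of a cyclic module A(1)/I. -/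
def A1qdeg (I : Submodule A1 A1) (n : ℕ) : Submodule (ZMod 2) (A1 ⧸ I) :=
  Submodule.map (I.mkQ.restrictScalars (ZMod 2)) (A1deg n)

/-!
For a left ideal `I` of a ring `A` and `a ∈ A`, right multiplication by `a` induces an exact
sequence `0 → A/(I : a) → A/I → A/(I + Aa) → 0`, where `(I : a) = {x | x * a ∈ I}`. For
`A = A(1)`, `I = (Sq¹)` and `a = Sq³` both outer terms are `A(1)/(Sq¹, Sq³)`: it remains to see
that `((Sq¹) : Sq³) = (Sq¹, Sq³)`.

The relations give `(Sq¹, Sq³) ≤ ((Sq¹) : Sq³)`. Modulo `(Sq¹, Sq³)` the algebra is spanned over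
`𝔽₂` by `1` and `Sq²`, and no nonzero combination of these lies in `((Sq¹) : Sq³)`, because `Sq³`
and `Sq²Sq³` are linearly independent in `A(1)/(Sq¹)`; the latter is read off from the action of
`A(1)` on `A(1)/(Sq¹)`. The modular law then forces equality.
-/

section Quotient

variable {R M N : Type*} [Ring R] [AddCommGroup M] [Module R M] [AddCommGroup N] [Module R N]
  {p : Submodule R M} {q r : Submodule R N} {f : M →ₗ[R] N}

lemma mapQ_injective_iff (h : p ≤ q.comap f) :
    Function.Injective (p.mapQ q f h) ↔ q.comap f ≤ p := by
  rw [← LinearMap.ker_eq_bot, Submodule.ker_mapQ, ← le_bot_iff,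
    Submodule.map_le_iff_le_comap, Submodule.comap_bot, Submodule.ker_mkQ]

lemma ker_factor (h : q ≤ r) : LinearMap.ker (Submodule.factor h) = r.map q.mkQ := by
  rw [Submodule.factor, Submodule.ker_mapQ, Submodule.comap_id]

lemma range_mapQ_eq_ker_factor (h : p ≤ q.comap f) (hqr : q ≤ r)
    (hr : q ⊔ LinearMap.range f = r) :
    LinearMap.range (p.mapQ q f h) = LinearMap.ker (Submodule.factor hqr) := by
  rw [Submodule.range_mapQ, ker_factor, ← hr, Submodule.map_sup, Submodule.mkQ_map_self,
    bot_sup_eq]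

end Quotient

lemma smul_mem_of_adjoin_eq_top {R A M : Type*} [CommSemiring R] [Semiring A] [Algebra R A]
    [AddCommMonoid M] [Module R M] [Module A M] [IsScalarTower R A M] {s : Set A}
    (hs : Algebra.adjoin R s = ⊤) {p : Submodule R M} (hp : ∀ a ∈ s, ∀ x ∈ p, a • x ∈ p)
    (a : A) {x : M} (hx : x ∈ p) : a • x ∈ p := by
  have ha : a ∈ Algebra.adjoin R s := hs ▸ Algebra.mem_top
  induction ha using Algebra.adjoin_induction generalizing x with
  | mem a ha => exact hp a ha x hx
  | algebraMap c => simpa only [algebraMap_smul] using p.smul_mem c hx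
  | add a b _ _ iha ihb => simpa only [add_smul] using p.add_mem (iha hx) (ihb hx)
  | mul a b _ _ iha ihb => simpa only [mul_smul] using iha (ihb hx)

lemma Sq1_mul_Sq1 : Sq1 * Sq1 = 0 := by
  simpa [Sq1] using RingQuot.mkAlgHom_rel (ZMod 2) A1Rel.sq1_sq1

lemma Sq2_mul_Sq2 : Sq2 * Sq2 = Sq1 * Sq2 * Sq1 := by
  simpa [Sq1, Sq2] using RingQuot.mkAlgHom_rel (ZMod 2) A1Rel.adem

lemma Sq2_mul_Sq1_mul_Sq2_mul_Sq1 : Sq2 * Sq1 * Sq2 * Sq1 = Sq1 * Sq2 * Sq1 * Sq2 := by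
  simpa [Sq1, Sq2] using RingQuot.mkAlgHom_rel (ZMod 2) A1Rel.top

lemma Sq1_mul_Sq3 : Sq1 * Sq3 = 0 := by
  rw [Sq3, ← mul_assoc, Sq1_mul_Sq1, zero_mul]

lemma Sq3_mul_Sq3 : Sq3 * Sq3 = Sq2 * Sq1 * Sq2 * Sq1 := by
  rw [Sq2_mul_Sq1_mul_Sq2_mul_Sq1, Sq3, ← mul_assoc]

lemma adjoin_Sq1_Sq2 : Algebra.adjoin (ZMod 2) {Sq1, Sq2} = ⊤ := by
  have h : RingQuot.mkAlgHom (ZMod 2) A1Rel '' Set.range (FreeAlgebra.ι (ZMod 2)) =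
      {Sq1, Sq2} := by
    ext
    simp [Sq1, Sq2, eq_comm]
  rw [← h, ← AlgHom.map_adjoin, FreeAlgebra.adjoin_range_ι, Algebra.map_top,
    AlgHom.range_eq_top]
  exact RingQuot.mkAlgHom_surjective _ _

namespace A1

section Lift

variable {B : Type*} [Semiring B] [Algebra (ZMod 2) B] {s₁ s₂ : B} (h₁₁ : s₁ * s₁ = 0)
  (h₂₂ : s₂ * s₂ = s₁ * s₂ * s₁) (h₂₁₂₁ : s₂ * s₁ * s₂ * s₁ = s₁ * s₂ * s₁ * s₂)

/-- The universal property of `A(1)`: elements `s₁`, `s₂` of an `𝔽₂`-algebra that satisfy the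
defining relations determine an algebra map with `Sq¹ ↦ s₁` and `Sq² ↦ s₂`. -/
def lift : A1 →ₐ[ZMod 2] B :=
  RingQuot.liftAlgHom (ZMod 2) ⟨FreeAlgebra.lift (ZMod 2) ![s₁, s₂], by
    rintro _ _ (_ | _ | _) <;> simpa⟩

@[simp]
lemma lift_Sq1 : lift h₁₁ h₂₂ h₂₁₂₁ Sq1 = s₁ := by
  simp [lift, Sq1]

@[simp]
lemma lift_Sq2 : lift h₁₁ h₂₂ h₂₁₂₁ Sq2 = s₂ := by
  simp [lift, Sq2]

end Lift

/-- The action of `A(1)` on `A(1)/(Sq¹)`, as matrices in the basis `1, Sq², Sq³, Sq²Sq³`: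
`Sq²` sends `1 ↦ Sq²` and `Sq³ ↦ Sq²Sq³`, while `Sq¹` sends `Sq² ↦ Sq³`; all other basis vectors
go to `0`. -/
def quotSq1Rep : A1 →ₐ[ZMod 2] Matrix (Fin 4) (Fin 4) (ZMod 2) :=
  lift (s₁ := !![0, 0, 0, 0; 0, 0, 0, 0; 0, 1, 0, 0; 0, 0, 0, 0])
    (s₂ := !![0, 0, 0, 0; 1, 0, 0, 0; 0, 0, 0, 0; 0, 0, 1, 0])
    (by decide) (by decide) (by decide)

lemma quotSq1Rep_apply_zero_of_mem {x : A1} (hx : x ∈ Submodule.span A1 {Sq1}) (i : Fin 4) :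
    quotSq1Rep x i 0 = 0 := by
  obtain ⟨a, rfl⟩ := Submodule.mem_span_singleton.1 hx
  simp [quotSq1Rep, Matrix.mul_apply, Fin.sum_univ_four]

end A1

lemma eq_zero_of_smul_Sq3_add_smul_mem {α β : ZMod 2}
    (h : α • Sq3 + β • (Sq2 * Sq3) ∈ Submodule.span A1 {Sq1}) : α = 0 ∧ β = 0 := by
  have hα := A1.quotSq1Rep_apply_zero_of_mem h 2
  have hβ := A1.quotSq1Rep_apply_zero_of_mem h 3
  exact ⟨by simpa [A1.quotSq1Rep, Sq3] using hα, by simpa [A1.quotSq1Rep, Sq3] using hβ⟩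

lemma span_Sq1_Sq3_le_comap :
    Submodule.span A1 {Sq1, Sq3} ≤
      (Submodule.span A1 {Sq1}).comap (LinearMap.toSpanSingleton A1 A1 Sq3) := by
  rw [Submodule.span_le, Set.pair_subset_iff]
  constructor
  · simp [Sq1_mul_Sq3]
  · exact Submodule.mem_span_singleton.2 ⟨Sq2 * Sq1 * Sq2, Sq3_mul_Sq3.symm⟩

lemma span_Sq1_Sq3_sup_span_one_Sq2 :
    (Submodule.span A1 {Sq1, Sq3}).restrictScalars (ZMod 2) ⊔
      Submodule.span (ZMod 2) {1, Sq2} = ⊤ := by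
  set J := Submodule.span A1 {Sq1, Sq3}
  set V := J.restrictScalars (ZMod 2) ⊔ Submodule.span (ZMod 2) {1, Sq2}
  have hJV {x : A1} (hx : x ∈ J) : x ∈ V := Submodule.mem_sup_left hx
  have hSq1 : Sq1 ∈ J := Submodule.subset_span (by simp)
  have hSq3 : Sq3 ∈ J := Submodule.subset_span (by simp)
  have h_one : 1 ∈ V := Submodule.mem_sup_right (Submodule.subset_span (by simp))
  have hSq2 : Sq2 ∈ V := Submodule.mem_sup_right (Submodule.subset_span (by simp))
  have h_mul {a : A1} (ha : a * 1 ∈ V) (ha' : a * Sq2 ∈ V) :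
      V ≤ V.comap (LinearMap.mulLeft (ZMod 2) a) :=
    sup_le (fun x hx => hJV (J.smul_mem a hx)) (Submodule.span_le.2 (Set.pair_subset ha ha'))
  have hV_Sq1 : V ≤ V.comap (LinearMap.mulLeft (ZMod 2) Sq1) :=
    h_mul (by simpa using hJV hSq1) (hJV hSq3)
  have hV_Sq2 : V ≤ V.comap (LinearMap.mulLeft (ZMod 2) Sq2) :=
    h_mul (by simpa using hSq2) (by
      rw [Sq2_mul_Sq2]
      exact hJV (J.smul_mem (Sq1 * Sq2) hSq1))
  rw [eq_top_iff]
  intro x _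
  have hx : x • (1 : A1) ∈ V := by
    refine smul_mem_of_adjoin_eq_top adjoin_Sq1_Sq2 ?_ x h_one
    rintro _ (rfl | rfl)
    exacts [hV_Sq1, hV_Sq2]
  simpa using hx

lemma comap_toSpanSingleton_Sq3 :
    (Submodule.span A1 {Sq1}).comap (LinearMap.toSpanSingleton A1 A1 Sq3) =
      Submodule.span A1 {Sq1, Sq3} := by
  symm
  apply Submodule.restrictScalars_injective (ZMod 2) A1 A1
  refine eq_of_le_of_inf_le_of_sup_le (z := Submodule.span (ZMod 2) {1, Sq2})
    (Submodule.restrictScalars_mono (ZMod 2) span_Sq1_Sq3_le_comap) ?_ ?_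
  · rintro x ⟨hx, hxV⟩
    obtain ⟨α, β, rfl⟩ := Submodule.mem_span_pair.1 hxV
    obtain ⟨rfl, rfl⟩ : α = 0 ∧ β = 0 :=
      eq_zero_of_smul_Sq3_add_smul_mem (by simpa [add_mul] using hx)
    simp
  · rw [span_Sq1_Sq3_sup_span_one_Sq2]
    exact le_top

lemma A1deg_mul_le (m n : ℕ) : A1deg m * A1deg n ≤ A1deg (m + n) := by
  rw [A1deg, A1deg, Submodule.span_mul_span, Submodule.span_le]
  rintro _ ⟨_, ⟨l, rfl, rfl⟩, _, ⟨l', rfl, rfl⟩, rfl⟩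
  exact Submodule.subset_span ⟨l ++ l', by simp [A1wt], by simp [A1word]⟩

lemma Sq3_mem_A1deg : Sq3 ∈ A1deg 3 :=
  Submodule.subset_span ⟨[0, 1], by simp [A1wt], by simp [A1word, A1gen, Sq3]⟩

/-- The short exact sequence of graded left A(1)-modules
`0 → Σ³ A(1)/(Sq¹,Sq³) → A(1)/(Sq¹) → A(1)/(Sq¹,Sq³) → 0`, where the first map sends
the generator to the class of Sq³ (raising degrees by 3) and the second is the
canonical projection. -/
theorem ses_ku_HZ :
    ∃ f : (A1 ⧸ (Submodule.span A1 {Sq1, Sq3})) →ₗ[A1] (A1 ⧸ (Submodule.span A1 {Sq1})),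
    ∃ g : (A1 ⧸ (Submodule.span A1 {Sq1})) →ₗ[A1] (A1 ⧸ (Submodule.span A1 {Sq1, Sq3})),
      f ((Submodule.span A1 {Sq1, Sq3}).mkQ 1) = (Submodule.span A1 {Sq1}).mkQ Sq3 ∧
      (∀ x : A1, g ((Submodule.span A1 {Sq1}).mkQ x) = (Submodule.span A1 {Sq1, Sq3}).mkQ x) ∧
      Function.Injective f ∧ Function.Surjective g ∧
      LinearMap.range f = LinearMap.ker g ∧
      (∀ n : ℕ, ∀ x ∈ A1qdeg (Submodule.span A1 {Sq1, Sq3}) n,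
        f x ∈ A1qdeg (Submodule.span A1 {Sq1}) (n + 3)) := by
  set I := Submodule.span A1 {Sq1}
  set J := Submodule.span A1 {Sq1, Sq3}
  let rightMulSq3 := LinearMap.toSpanSingleton A1 A1 Sq3
  have hIJ : I ≤ J := Submodule.span_mono (by simp)
  have h_sup : I ⊔ LinearMap.range rightMulSq3 = J := by
    rw [LinearMap.range_toSpanSingleton, ← Submodule.span_union, Set.singleton_union]
  have h_comap : I.comap rightMulSq3 = J := comap_toSpanSingleton_Sq3
  refine ⟨J.mapQ I rightMulSq3 h_comap.ge, Submodule.factor hIJ, ?_, Submodule.factor_mk hIJ,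
    (mapQ_injective_iff _).2 h_comap.le, Submodule.factor_surjective hIJ,
    range_mapQ_eq_ker_factor _ hIJ h_sup, ?_⟩
  · simp [rightMulSq3]
  · rintro n _ ⟨y, hy, rfl⟩
    exact ⟨y * Sq3, A1deg_mul_le n 3 (Submodule.mul_mem_mul hy Sq3_mem_A1deg), rfl⟩

end
end

section
/- The left ideal of A(1) generated by Sq² is isomorphic, as a graded left A(1)-module, to Σ³ A(1)/(Sq³), i.e. the annihilator of Sq² for left multiplication in A(1) is the left ideal generated by Sq³ = Sq¹Sq². -/
noncomputable section

/-!
A(1) has a basis of eight monomials. Right multiplication by `Sq2` sends five of them to distinct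
monomials and kills the other three, which are `Sq3`, `Sq2 * Sq3` and `Sq1 * Sq2 * Sq3`; so these
three span its kernel. The relations show that the monomials span A(1). For their independence, one
checks that the resulting multiplication table defines an action of A(1) on `Fin 8 → ZMod 2`: the
monomials carry the first standard basis vector to the whole standard basis.
-/

section LinearAlgebra

variable {R A M N ι : Type*}

theorem adjoin_toSubmodule_le_of_mul_mem [CommSemiring R] [Semiring A] [Algebra R A] {s : Set A}
    {L : Submodule R A} (one_mem : 1 ∈ L) (mul_mem : ∀ a ∈ s, ∀ x ∈ L, a * x ∈ L) :
    (Algebra.adjoin R s).toSubmodule ≤ L :=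
  (Algebra.adjoin_toSubmodule_le R).mpr fun _ hx ↦
    Submonoid.closure_induction_left one_mem (fun a ha x _ hx ↦ mul_mem a ha x hx) hx

theorem mul_mem_span_range [CommSemiring R] [Semiring A] [Algebra R A] {v : ι → A} {a : A}
    (h : ∀ i, a * v i ∈ Submodule.span R (Set.range v)) :
    ∀ x ∈ Submodule.span R (Set.range v), a * x ∈ Submodule.span R (Set.range v) :=
  (Submodule.span_le (p := (Submodule.span R (Set.range v)).comap (LinearMap.mulLeft R a))).mpr
    (Set.range_subset_iff.mpr h)

theorem ker_eq_span_image [Ring R] [AddCommGroup M] [Module R M] [AddCommMonoid N] [Module R N]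
    {f : M →ₗ[R] N} {v : ι → M} {s t : Set ι} (span_eq_top : Submodule.span R (Set.range v) = ⊤)
    (union_eq_univ : s ∪ t = Set.univ) (map_eq_zero : ∀ i ∈ s, f (v i) = 0)
    (indep : LinearIndepOn R (f ∘ v) t) :
    LinearMap.ker f = Submodule.span R (v '' s) := by
  have span_le_ker : Submodule.span R (v '' s) ≤ LinearMap.ker f :=
    Submodule.span_le.mpr (Set.forall_mem_image.mpr map_eq_zero)
  have disjoint_ker : Disjoint (Submodule.span R (v '' t)) (LinearMap.ker f) := by
    rw [Set.image_eq_range]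
    exact Submodule.range_ker_disjoint indep
  have sup_eq_top : Submodule.span R (v '' s) ⊔ Submodule.span R (v '' t) = ⊤ := by
    rw [← Submodule.span_union, ← Set.image_union, union_eq_univ, Set.image_univ, span_eq_top]
  calc LinearMap.ker f
      = (Submodule.span R (v '' s) ⊔ Submodule.span R (v '' t)) ⊓ LinearMap.ker f := by
        rw [sup_eq_top, top_inf_eq]
    _ = Submodule.span R (v '' s) ⊔ Submodule.span R (v '' t) ⊓ LinearMap.ker f :=
        sup_inf_assoc_of_le _ span_le_ker
    _ = Submodule.span R (v '' s) := by rw [disjoint_ker.eq_bot, sup_bot_eq]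

theorem exists_span_singleton_equiv_quotient [Ring R] [AddCommGroup M] [Module R M] {x : M}
    {I : Submodule R R} (h : ∀ r : R, r • x = 0 ↔ r ∈ I) :
    ∃ e : Submodule.span R {x} ≃ₗ[R] R ⧸ I,
      e ⟨x, Submodule.mem_span_singleton_self x⟩ = I.mkQ 1 := by
  obtain rfl : Ideal.torsionOf R M x = I := Submodule.ext h
  refine ⟨(Ideal.quotTorsionOfEquivSpanSingleton R M x).symm, ?_⟩
  rw [LinearEquiv.symm_apply_eq, Submodule.mkQ_apply]
  exact Subtype.ext (one_smul R x).symm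

end LinearAlgebra

namespace A1

section Relations

theorem sq1_mul_sq1 : Sq1 * Sq1 = 0 := by
  simpa [Sq1] using RingQuot.mkAlgHom_rel (ZMod 2) A1Rel.sq1_sq1

theorem sq1_mul_sq1_mul (x : A1) : Sq1 * (Sq1 * x) = 0 := by
  rw [← mul_assoc, sq1_mul_sq1, zero_mul]

theorem sq2_mul_sq2 : Sq2 * Sq2 = Sq1 * (Sq2 * Sq1) := by
  simpa [Sq1, Sq2, mul_assoc] using RingQuot.mkAlgHom_rel (ZMod 2) A1Rel.adem

theorem sq2_mul_sq2_mul (x : A1) : Sq2 * (Sq2 * x) = Sq1 * (Sq2 * (Sq1 * x)) := by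
  rw [← mul_assoc, sq2_mul_sq2]
  simp only [mul_assoc]

theorem sq2_sq1_sq2_sq1 : Sq2 * (Sq1 * (Sq2 * Sq1)) = Sq1 * (Sq2 * (Sq1 * Sq2)) := by
  simpa [Sq1, Sq2, mul_assoc] using RingQuot.mkAlgHom_rel (ZMod 2) A1Rel.top

theorem sq2_sq1_sq2_sq1_sq2 : Sq2 * (Sq1 * (Sq2 * (Sq1 * Sq2))) = 0 := by
  rw [← sq2_sq1_sq2_sq1, sq2_mul_sq2_mul, sq1_mul_sq1_mul, mul_zero, mul_zero]

theorem sq3_mul_sq2 : Sq3 * Sq2 = 0 := by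
  rw [Sq3, mul_assoc, sq2_mul_sq2, sq1_mul_sq1_mul]

end Relations

section Monomials

/-- The monomial basis of A(1), listed by increasing degree: the alternating words in `Sq1` and
`Sq2` of length at most three, and `Sq1 * Sq2 * Sq1 * Sq2`. -/
def monomial : Fin 8 → A1 :=
  ![1, Sq1, Sq2, Sq1 * Sq2, Sq2 * Sq1, Sq1 * (Sq2 * Sq1), Sq2 * (Sq1 * Sq2),
    Sq1 * (Sq2 * (Sq1 * Sq2))]

theorem sq1_mul_monomial (i : Fin 8) :
    Sq1 * monomial i = ![monomial 1, 0, monomial 3, 0, monomial 5, 0, monomial 7, 0] i := by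
  fin_cases i <;> simp [monomial, sq1_mul_sq1, sq1_mul_sq1_mul]

theorem sq2_mul_monomial (i : Fin 8) :
    Sq2 * monomial i =
      ![monomial 2, monomial 4, monomial 5, monomial 6, 0, monomial 7, 0, 0] i := by
  fin_cases i <;>
    simp [monomial, sq1_mul_sq1, sq1_mul_sq1_mul, sq2_mul_sq2, sq2_mul_sq2_mul, sq2_sq1_sq2_sq1,
      sq2_sq1_sq2_sq1_sq2]

theorem monomial_mul_sq2 (i : Fin 8) :
    monomial i * Sq2 =
      ![monomial 2, monomial 3, monomial 5, 0, monomial 6, monomial 7, 0, 0] i := by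
  fin_cases i <;> simp [monomial, mul_assoc, sq1_mul_sq1_mul, sq2_mul_sq2]

theorem adjoin_sq1_sq2 : Algebra.adjoin (ZMod 2) {Sq1, Sq2} = ⊤ := by
  have range_eq : Set.range (RingQuot.mkAlgHom (ZMod 2) A1Rel ∘ FreeAlgebra.ι (ZMod 2)) =
      {Sq1, Sq2} := by
    ext x
    simp [Sq1, Sq2, eq_comm]
  rw [← range_eq, Set.range_comp, ← AlgHom.map_adjoin, FreeAlgebra.adjoin_range_ι,
    Algebra.map_top, AlgHom.range_eq_top]
  exact RingQuot.mkAlgHom_surjective (ZMod 2) A1Rel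

theorem span_range_monomial : Submodule.span (ZMod 2) (Set.range monomial) = ⊤ := by
  have monomial_mem (i : Fin 8) : monomial i ∈ Submodule.span (ZMod 2) (Set.range monomial) :=
    Submodule.subset_span ⟨i, rfl⟩
  rw [eq_top_iff, ← Algebra.top_toSubmodule, ← adjoin_sq1_sq2]
  refine adjoin_toSubmodule_le_of_mul_mem (monomial_mem 0) ?_
  rintro a (rfl | rfl) <;> refine mul_mem_span_range fun i ↦ ?_
  · rw [sq1_mul_monomial]
    fin_cases i <;> simp [monomial_mem]
  · rw [sq2_mul_monomial]
    fin_cases i <;> simp [monomial_mem]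

end Monomials

section RegularRepresentation

open LinearMap (proj)

/-- Left multiplication by `Sq1` in coordinates with respect to `monomial`. -/
def coordSq1 : Module.End (ZMod 2) (Fin 8 → ZMod 2) :=
  LinearMap.pi ![0, proj 0, 0, proj 2, 0, proj 4, 0, proj 6]

/-- Left multiplication by `Sq2` in coordinates with respect to `monomial`. -/
def coordSq2 : Module.End (ZMod 2) (Fin 8 → ZMod 2) :=
  LinearMap.pi ![0, 0, proj 0, 0, proj 1, proj 2, proj 3, proj 5]

/-- The left regular representation of A(1) in coordinates with respect to `monomial`. It is defined
on generators, without assuming that `monomial` is a basis, so as to prove linear independence. -/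
def regularRep : A1 →ₐ[ZMod 2] Module.End (ZMod 2) (Fin 8 → ZMod 2) :=
  RingQuot.liftAlgHom (ZMod 2) ⟨FreeAlgebra.lift (ZMod 2) ![coordSq1, coordSq2], by
    rintro _ _ (_ | _ | _) <;> ext j i <;> fin_cases i <;> simp [coordSq1, coordSq2]⟩

theorem regularRep_sq1 : regularRep Sq1 = coordSq1 := by
  simp [regularRep, Sq1]

theorem regularRep_sq2 : regularRep Sq2 = coordSq2 := by
  simp [regularRep, Sq2]

theorem regularRep_monomial_apply_single_zero (i : Fin 8) :
    regularRep (monomial i) (Pi.single 0 1) = Pi.single i 1 := by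
  ext j
  fin_cases i <;> fin_cases j <;>
    simp [monomial, regularRep_sq1, regularRep_sq2, coordSq1, coordSq2]

theorem linearIndependent_monomial : LinearIndependent (ZMod 2) monomial := by
  refine .of_comp (LinearMap.applyₗ (Pi.single 0 1) ∘ₗ regularRep.toLinearMap) ?_
  convert (Pi.basisFun (ZMod 2) (Fin 8)).linearIndependent using 1
  ext1 i
  simp [regularRep_monomial_apply_single_zero]

end RegularRepresentation

section Annihilator

theorem linearIndepOn_monomial_mul_sq2 :
    LinearIndepOn (ZMod 2) (fun i ↦ monomial i * Sq2) {0, 1, 2, 4, 5} := by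
  let index : Fin 8 → Fin 8 := ![2, 3, 5, 0, 6, 7, 0, 0]
  have injOn : Set.InjOn index {0, 1, 2, 4, 5} := by simp [Set.InjOn, index]
  have indep : LinearIndepOn (ZMod 2) (monomial ∘ index) {0, 1, 2, 4, 5} :=
    linearIndependent_monomial.comp _ injOn.injective
  refine indep.congr ?_
  rintro _ (rfl | rfl | rfl | rfl | rfl) <;> simp [monomial_mul_sq2, index]

theorem ker_mulRight_sq2 :
    LinearMap.ker (LinearMap.mulRight (ZMod 2) Sq2) =
      Submodule.span (ZMod 2) {Sq3, Sq2 * Sq3, Sq1 * (Sq2 * Sq3)} := by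
  have image_eq : monomial '' {3, 6, 7} = {Sq3, Sq2 * Sq3, Sq1 * (Sq2 * Sq3)} := by
    simp [Set.image_insert_eq, monomial, Sq3]
  rw [← image_eq]
  refine ker_eq_span_image (t := {0, 1, 2, 4, 5}) span_range_monomial ?_ ?_
    linearIndepOn_monomial_mul_sq2
  · ext i
    fin_cases i <;> simp
  · simp [monomial_mul_sq2]

theorem mul_sq2_eq_zero_iff (x : A1) : x * Sq2 = 0 ↔ x ∈ Submodule.span A1 {Sq3} := by
  constructor
  · intro hx
    have ker_le : LinearMap.ker (LinearMap.mulRight (ZMod 2) Sq2) ≤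
        (Submodule.span A1 {Sq3}).restrictScalars (ZMod 2) := by
      rw [ker_mulRight_sq2, Submodule.span_le]
      have sq3_mem : Sq3 ∈ Submodule.span A1 {Sq3} := Submodule.mem_span_singleton_self Sq3
      rintro _ (rfl | rfl | rfl)
      exacts [sq3_mem, Ideal.mul_mem_left _ _ sq3_mem,
        Ideal.mul_mem_left _ _ (Ideal.mul_mem_left _ _ sq3_mem)]
    exact ker_le hx
  · intro hx
    obtain ⟨y, rfl⟩ := Submodule.mem_span_singleton.mp hx
    rw [smul_eq_mul, mul_assoc, sq3_mul_sq2, mul_zero]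

end Annihilator

end A1

/-- Right multiplication by Sq² on A(1) has kernel the left ideal generated by
Sq³ = Sq¹Sq²; consequently the left ideal generated by Sq² is isomorphic as a left
A(1)-module to Σ³ A(1)/(Sq³). -/
theorem right_mul_sq2_kernel :
    (∀ x : A1, x * Sq2 = 0 ↔ x ∈ Submodule.span A1 {Sq3}) ∧
    ∃ e : (Submodule.span A1 {Sq2}) ≃ₗ[A1] (A1 ⧸ (Submodule.span A1 {Sq3})),
      e ⟨Sq2, Submodule.subset_span (Set.mem_singleton _)⟩ =
        (Submodule.span A1 {Sq3}).mkQ 1 :=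
  ⟨A1.mul_sq2_eq_zero_iff, exists_span_singleton_equiv_quotient A1.mul_sq2_eq_zero_iff⟩

end
end
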